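/- Let β = i·tan((π − α)/4) and K = √(2 sin(α/2)/(1 + sin(α/2))). For n ≥ 1, define F_n(θ) = 2K·e^{inθ/2}·[ (iβ/(1 + β²))·e^{−iθ/2}·cos((n−1)λ_θ) + (1/(1 + β²))·cos(n λ_θ) ] for θ ∈ (α, 2π − α), where λ_θ = arccos(cos(θ/2)/cos(α/2)). Then for every integer m with 0 ≤ m ≤ n − 1, ∫_α^{2π−α} F_n(θ)·e^{−imθ}·w_α(θ) dθ = 0, and (1/(2π)) ∫_α^{2π−α} |F_n(θ)|²·w_α(θ) dθ = 1. -/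

import Mathlib

/-!
Put `t = tan ((π - α) / 4) ∈ (0, 1)`, so that `cos (α / 2) = 2t / (1 + t²)` and `K² = 1 - t²`.
Write `λ` for the angle `λ_θ` and `φ = θ / 2`, so that `cos φ = cos (α / 2) cos λ`. The substitution
`θ = 2 φ(λ)` turns `w_α(θ) dθ` into `ρ(λ) dλ` on `(0, π)`, where `ρ` is the Poisson kernel of radius
`t²` in the variable `2λ` (`integral_arc_eq`). Its even moments are `∫ cos (2kλ) ρ = π t^(2k)`
(`moment_eq`): they satisfy a three-term recurrence whose other solution is unbounded.

Multiplying by `2 cos φ = 2 cos (α / 2) cos λ` raises and lowers the frequencies both of `cos (jφ)`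
and of `cos (nλ)`. Induction on `j` then gives `∫ cos (jφ) cos (nλ) ρ = π t^n` whenever `j ≤ n`
have the same parity (`mixed_eq`), and the reflection `λ ↦ π - λ` kills the corresponding sine
integral. Therefore `∫ e^{i(n - 2m)φ} cos (nλ) ρ = π t^n` for all `0 ≤ m ≤ n` (`integral_exp_eq`).
Up to a constant, `F_n` is `e^{inφ} (cos (nλ) - t e^{-iφ} cos ((n - 1)λ))`, so its `m`-th moment is
proportional to `π t^n - t · π t^(n-1) = 0`. The norm is a combination of four even moments.
-/

open MeasureTheory Filter Set

/-- The Akhiezer-Chebyshev weight on the arc `(α, 2π - α)`. -/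
noncomputable def wAC (α θ : ℝ) : ℝ :=
  Real.sin (α / 2) /
    (2 * Real.sin (θ / 2) * Real.sqrt (Real.cos (α / 2) ^ 2 - Real.cos (θ / 2) ^ 2))

/-! ### The density and the half-angle in the variable `λ` -/

/-- The density of the weight in the variable `l = λ_θ`: the Poisson kernel of radius `t ^ 2` at the
angle `2 * l`. The denominator is `|1 - t ^ 2 * exp (2 * I * l)| ^ 2`. -/
noncomputable def rho (t l : ℝ) : ℝ :=
  (1 - t ^ 4) / ((1 + t ^ 2) ^ 2 - 4 * t ^ 2 * Real.cos l ^ 2)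

/-- The half-angle `θ / 2 = arccos (cos (α / 2) * cos l)` as a function of `l = λ_θ`, with
`cos (α / 2)` written as `2 * t / (1 + t ^ 2)`. -/
noncomputable def phi (t l : ℝ) : ℝ := Real.arccos (2 * t / (1 + t ^ 2) * Real.cos l)

lemma rho_denom_ge (t l : ℝ) :
    (1 - t ^ 2) ^ 2 ≤ (1 + t ^ 2) ^ 2 - 4 * t ^ 2 * Real.cos l ^ 2 := by
  nlinarith [Real.sin_sq_add_cos_sq l, mul_nonneg (sq_nonneg t) (sq_nonneg (Real.sin l))]

lemma rho_denom_pos {t : ℝ} (h0 : 0 < t) (h1 : t < 1) (l : ℝ) :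
    0 < (1 + t ^ 2) ^ 2 - 4 * t ^ 2 * Real.cos l ^ 2 := by
  have : 0 < (1 - t ^ 2) ^ 2 := by
    have : 0 < 1 - t ^ 2 := by nlinarith
    positivity
  linarith [rho_denom_ge t l]

lemma rho_mul_denom {t : ℝ} (h0 : 0 < t) (h1 : t < 1) (l : ℝ) :
    rho t l * ((1 + t ^ 2) ^ 2 - 4 * t ^ 2 * Real.cos l ^ 2) = 1 - t ^ 4 :=
  div_mul_cancel₀ _ (rho_denom_pos h0 h1 l).ne'

lemma continuous_rho {t : ℝ} (h0 : 0 < t) (h1 : t < 1) : Continuous (rho t) := by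
  unfold rho
  exact Continuous.div (by fun_prop) (by fun_prop) fun l => (rho_denom_pos h0 h1 l).ne'

lemma continuous_phi (t : ℝ) : Continuous (phi t) := by
  unfold phi
  exact Real.continuous_arccos.comp (by fun_prop)

lemma abs_rho_le {t : ℝ} (h0 : 0 < t) (h1 : t < 1) (l : ℝ) :
    |rho t l| ≤ (1 - t ^ 4) / (1 - t ^ 2) ^ 2 := by
  have h2 : 0 < 1 - t ^ 2 := by nlinarith
  have h4 : 0 ≤ 1 - t ^ 4 := by nlinarith [sq_nonneg t]
  have hd := rho_denom_pos h0 h1 l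
  unfold rho
  rw [abs_of_nonneg (by positivity)]
  exact div_le_div_of_nonneg_left h4 (by positivity) (rho_denom_ge t l)

lemma ratio_mem {t : ℝ} (h0 : 0 < t) (h1 : t < 1) :
    0 < 2 * t / (1 + t ^ 2) ∧ 2 * t / (1 + t ^ 2) < 1 := by
  refine ⟨by positivity, ?_⟩
  rw [div_lt_one (by positivity)]
  nlinarith [sq_nonneg (1 - t), mul_pos (sub_pos.2 h1) (sub_pos.2 h1)]

lemma abs_ratio_mul_cos_lt {t : ℝ} (h0 : 0 < t) (h1 : t < 1) (l : ℝ) :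
    |2 * t / (1 + t ^ 2) * Real.cos l| < 1 := by
  obtain ⟨a, b⟩ := ratio_mem h0 h1
  rw [abs_mul, abs_of_pos a]
  nlinarith [Real.abs_cos_le_one l, abs_nonneg (Real.cos l)]

lemma cos_phi {t : ℝ} (h0 : 0 < t) (h1 : t < 1) (l : ℝ) :
    Real.cos (phi t l) = 2 * t / (1 + t ^ 2) * Real.cos l := by
  have := abs_lt.1 (abs_ratio_mul_cos_lt h0 h1 l)
  exact Real.cos_arccos this.1.le this.2.le

/-! ### Even moments of the density -/

/-- The even cosine moment `∫ cos (2kl) ρ(l) dl` over `(0, π)`. -/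
noncomputable def moment (t : ℝ) (k : ℕ) : ℝ :=
  ∫ l in (0 : ℝ)..Real.pi, Real.cos (2 * k * l) * rho t l

lemma integral_cos_two_mul (k : ℕ) :
    ∫ l in (0 : ℝ)..Real.pi, Real.cos (2 * (k + 1) * l) = 0 := by
  have hk : (2 * ((k : ℝ) + 1)) ≠ 0 := by positivity
  rw [intervalIntegral.integral_comp_mul_left (fun x => Real.cos x) hk]
  have : Real.sin (2 * ((k : ℝ) + 1) * Real.pi) = 0 := by
    have := Real.sin_nat_mul_pi (2 * (k + 1))
    push_cast at this
    exact this
  simp [this]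

/-- The denominator of `rho` is `1 + t ^ 4 - 2 * t ^ 2 * cos (2 * l)`, so multiplying `cos (2(k+1)l)`
by it gives a three-term relation whose right-hand side integrates to zero. It is written here in
terms of the differences `moment t (k + 1) - t ^ 2 * moment t k`. -/
lemma moment_rec {t : ℝ} (h0 : 0 < t) (h1 : t < 1) (k : ℕ) :
    t ^ 2 * (moment t (k + 2) - t ^ 2 * moment t (k + 1)) =
      moment t (k + 1) - t ^ 2 * moment t k := by
  have hr := continuous_rho h0 h1
  have key : ∫ l in (0 : ℝ)..Real.pi, ((1 + t ^ 4) * (Real.cos (2 * (k + 1 : ℕ) * l) * rho t l)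
      - t ^ 2 * (Real.cos (2 * (k + 2 : ℕ) * l) * rho t l + Real.cos (2 * k * l) * rho t l)) = 0 := by
    have : ∀ l : ℝ, (1 + t ^ 4) * (Real.cos (2 * (k + 1 : ℕ) * l) * rho t l)
      - t ^ 2 * (Real.cos (2 * (k + 2 : ℕ) * l) * rho t l + Real.cos (2 * k * l) * rho t l)
      = (1 - t ^ 4) * Real.cos (2 * (k + 1) * l) := by
      intro l
      have hd := rho_mul_denom h0 h1 l
      have e1 : (2 * (k + 2 : ℕ) * l : ℝ) = 2 * (k + 1) * l + 2 * l := by push_cast; ring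
      have e2 : (2 * k * l : ℝ) = 2 * (k + 1) * l - 2 * l := by ring
      rw [e1, e2, Real.cos_add, Real.cos_sub, Real.cos_two_mul l]
      push_cast
      linear_combination Real.cos (2 * (k + 1) * l) * hd
    simp_rw [this]
    rw [intervalIntegral.integral_const_mul, integral_cos_two_mul, mul_zero]
  rw [intervalIntegral.integral_sub, intervalIntegral.integral_const_mul,
    intervalIntegral.integral_const_mul, intervalIntegral.integral_add] at key
  · simp only [moment]
    linarith
  all_goals exact Continuous.intervalIntegrable (by fun_prop) _ _

lemma moment_zero_eq {t : ℝ} (h0 : 0 < t) (h1 : t < 1) :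
    (1 + t ^ 4) * moment t 0 - 2 * t ^ 2 * moment t 1 = (1 - t ^ 4) * Real.pi := by
  have hr := continuous_rho h0 h1
  simp only [moment]
  rw [← intervalIntegral.integral_const_mul, ← intervalIntegral.integral_const_mul,
    ← intervalIntegral.integral_sub]
  · have : ∀ l : ℝ, (1 + t ^ 4) * (Real.cos (2 * (0 : ℕ) * l) * rho t l)
      - 2 * t ^ 2 * (Real.cos (2 * (1 : ℕ) * l) * rho t l) = (1 - t ^ 4) := by
      intro l
      have hd := rho_mul_denom h0 h1 l
      simp only [Nat.cast_zero, mul_zero, zero_mul, Real.cos_zero, Nat.cast_one, mul_one,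
        Real.cos_two_mul]
      linear_combination hd
    simp_rw [this]
    rw [intervalIntegral.integral_const, sub_zero, smul_eq_mul, mul_comm]
  all_goals exact Continuous.intervalIntegrable (by fun_prop) _ _

lemma abs_moment_le {t : ℝ} (h0 : 0 < t) (h1 : t < 1) (k : ℕ) :
    |moment t k| ≤ (1 - t ^ 4) / (1 - t ^ 2) ^ 2 * Real.pi := by
  have := intervalIntegral.norm_integral_le_of_norm_le_const (a := 0) (b := Real.pi)
    (f := fun l => Real.cos (2 * k * l) * rho t l) (C := (1 - t ^ 4) / (1 - t ^ 2) ^ 2) (by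
      intro l _
      rw [norm_mul, Real.norm_eq_abs, Real.norm_eq_abs]
      calc _ ≤ 1 * |rho t l| :=
            mul_le_mul_of_nonneg_right (Real.abs_cos_le_one _) (abs_nonneg _)
        _ ≤ _ := by rw [one_mul]; exact abs_rho_le h0 h1 l)
  simpa [moment, abs_of_pos Real.pi_pos] using this

/-- The differences `moment t (k + 1) - t ^ 2 * moment t k` grow like `t ^ (-2k)` by `moment_rec`
unless they vanish, and they are bounded by `abs_moment_le`. -/
lemma moment_step {t : ℝ} (h0 : 0 < t) (h1 : t < 1) (k : ℕ) :
    moment t (k + 1) = t ^ 2 * moment t k := by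
  have hD : ∀ j : ℕ, (t ^ 2) ^ j * (moment t (k + j + 1) - t ^ 2 * moment t (k + j)) =
      moment t (k + 1) - t ^ 2 * moment t k := by
    intro j
    induction j with
    | zero => simp
    | succ j ih =>
      rw [← ih, ← moment_rec h0 h1 (k + j)]
      ring_nf
  have hlim : Tendsto (fun j : ℕ => (t ^ 2) ^ j *
      (moment t (k + j + 1) - t ^ 2 * moment t (k + j))) atTop (nhds 0) := by
    set C := (1 - t ^ 4) / (1 - t ^ 2) ^ 2 * Real.pi
    have hp := tendsto_pow_atTop_nhds_zero_of_lt_one (sq_nonneg t) (show t ^ 2 < 1 by nlinarith)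
    refine hp.zero_mul_isBoundedUnder_le ⟨C + t ^ 2 * C, ?_⟩
    simp only [eventually_map, Function.comp]
    refine Eventually.of_forall fun j => ?_
    refine (norm_sub_le _ _).trans (add_le_add (abs_moment_le h0 h1 _) ?_)
    rw [norm_mul, Real.norm_of_nonneg (sq_nonneg t)]
    exact mul_le_mul_of_nonneg_left (abs_moment_le h0 h1 _) (sq_nonneg t)
  simp_rw [hD] at hlim
  linarith [tendsto_nhds_unique hlim tendsto_const_nhds]

lemma moment_eq {t : ℝ} (h0 : 0 < t) (h1 : t < 1) (k : ℕ) :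
    moment t k = Real.pi * t ^ (2 * k) := by
  induction k with
  | zero =>
    have h := moment_zero_eq h0 h1
    rw [moment_step h0 h1 0] at h
    have h4 : 1 - t ^ 4 ≠ 0 := by
      have : t ^ 4 < 1 := pow_lt_one₀ h0.le h1 (by norm_num)
      linarith
    apply mul_left_cancel₀ h4
    simp only [mul_zero, pow_zero, mul_one]
    linarith
  | succ k ih => rw [moment_step h0 h1, ih]; ring

/-! ### Mixed moments in the half-angle and `λ` -/

/-- The integral `∫ cos (j θ / 2) cos (n l) ρ(l) dl` over `(0, π)`, with `θ / 2 = phi t l`. -/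
noncomputable def mixed (t : ℝ) (n j : ℕ) : ℝ :=
  ∫ l in (0 : ℝ)..Real.pi, Real.cos (j * phi t l) * Real.cos (n * l) * rho t l

lemma mixed_one {t : ℝ} (h0 : 0 < t) (h1 : t < 1) (k : ℕ) :
    mixed t (1 + 2 * k) 1 = t / (1 + t ^ 2) * (mixed t (2 * (k + 1)) 0 + mixed t (2 * k) 0) := by
  have hr := continuous_rho h0 h1
  have hp := continuous_phi t
  simp only [mixed]
  rw [← intervalIntegral.integral_add, ← intervalIntegral.integral_const_mul]
  · congr 1
    ext l
    have e1 : ((2 * (k + 1) : ℕ) * l : ℝ) = (1 + 2 * k : ℕ) * l + l := by push_cast; ring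
    have e2 : ((2 * k : ℕ) * l : ℝ) = (1 + 2 * k : ℕ) * l - l := by push_cast; ring
    rw [e1, e2, Real.cos_add, Real.cos_sub, Nat.cast_one, one_mul, cos_phi h0 h1]
    simp
    ring
  all_goals exact Continuous.intervalIntegrable (by fun_prop) _ _

/-- Expands `2 cos φ cos ((j + 1)φ)` and `2 cos l cos ((n + 1)l)`, using
`cos φ = 2t / (1 + t ^ 2) * cos l`. -/
lemma mixed_rec {t : ℝ} (h0 : 0 < t) (h1 : t < 1) (n j : ℕ) :
    mixed t (n + 1) (j + 2) = 2 * t / (1 + t ^ 2) * (mixed t (n + 2) (j + 1) + mixed t n (j + 1)) -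
      mixed t (n + 1) j := by
  have hr := continuous_rho h0 h1
  have hp := continuous_phi t
  simp only [mixed]
  rw [← intervalIntegral.integral_add, ← intervalIntegral.integral_const_mul,
    ← intervalIntegral.integral_sub]
  · congr 1
    ext l
    have e1 : ((n + 2 : ℕ) * l : ℝ) = (n + 1 : ℕ) * l + l := by push_cast; ring
    have e2 : (n * l : ℝ) = (n + 1 : ℕ) * l - l := by push_cast; ring
    have e3 : ((j + 2 : ℕ) * phi t l : ℝ) = (j + 1 : ℕ) * phi t l + phi t l := by push_cast; ring
    have e4 : (j * phi t l : ℝ) = (j + 1 : ℕ) * phi t l - phi t l := by push_cast; ring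
    rw [e1, e2, e3, e4, Real.cos_add _ l, Real.cos_sub _ l, Real.cos_add _ (phi t l),
      Real.cos_sub _ (phi t l), cos_phi h0 h1]
    ring
  all_goals exact Continuous.intervalIntegrable (by fun_prop) _ _

lemma mixed_eq {t : ℝ} (h0 : 0 < t) (h1 : t < 1) (j k : ℕ) :
    mixed t (j + 2 * k) j = Real.pi * t ^ (j + 2 * k) := by
  induction j using Nat.twoStepInduction generalizing k with
  | zero =>
    have := moment_eq h0 h1 k
    simpa [moment, mixed] using this
  | one =>
    have hz : ∀ k, mixed t (2 * k) 0 = Real.pi * t ^ (2 * k) := fun k => by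
      simpa [moment, mixed] using moment_eq h0 h1 k
    rw [mixed_one h0 h1, hz, hz]
    field_simp
    ring
  | more j ih0 ih1 =>
    have a := mixed_rec h0 h1 (j + 1 + 2 * k) j
    have b1 := ih1 (k + 1)
    have b2 := ih1 k
    have b3 := ih0 (k + 1)
    rw [show j + 1 + 2 * (k + 1) = j + 1 + 2 * k + 2 by ring] at b1
    rw [show j + 2 * (k + 1) = j + 1 + 2 * k + 1 by ring] at b3
    rw [show j + 2 + 2 * k = j + 1 + 2 * k + 1 by ring, a, b1, b2, b3]
    field_simp
    ring

lemma phi_pi_sub (t l : ℝ) : phi t (Real.pi - l) = Real.pi - phi t l := by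
  simp [phi, Real.cos_pi_sub, Real.arccos_neg]

lemma rho_pi_sub (t l : ℝ) : rho t (Real.pi - l) = rho t l := by
  simp [rho, Real.cos_pi_sub]

/-- The integrand is odd under `l ↦ π - l`, because `n - 2m` and `n` have the same parity. -/
lemma integral_sin_eq_zero (t : ℝ) (n m : ℕ) :
    ∫ l in (0 : ℝ)..Real.pi,
      Real.sin (((n : ℝ) - 2 * m) * phi t l) * Real.cos (n * l) * rho t l = 0 := by
  set g : ℝ → ℝ := fun l => Real.sin (((n : ℝ) - 2 * m) * phi t l) * Real.cos (n * l) * rho t l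
    with hg
  have hodd : ∀ l, g (Real.pi - l) = - g l := by
    intro l
    have e1 : ((n : ℝ) - 2 * m) * (Real.pi - phi t l) =
        n * Real.pi - ((n : ℝ) - 2 * m) * phi t l - m * (2 * Real.pi) := by ring
    have e2 : (n : ℝ) * (Real.pi - l) = n * Real.pi - n * l := by ring
    have hs : Real.cos (n * Real.pi) ^ 2 = 1 := by
      have := Real.sin_sq_add_cos_sq (n * Real.pi)
      rw [Real.sin_nat_mul_pi] at this
      linarith
    simp only [hg, phi_pi_sub, rho_pi_sub]
    rw [e1, Real.sin_sub_nat_mul_two_pi, e2, Real.sin_sub, Real.cos_sub, Real.sin_nat_mul_pi]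
    linear_combination (-Real.sin (((n : ℝ) - 2 * m) * phi t l) * Real.cos (n * l) * rho t l) * hs
  have := intervalIntegral.integral_comp_sub_left (a := 0) (b := Real.pi) g Real.pi
  simp only [hodd, intervalIntegral.integral_neg, sub_self, sub_zero] at this
  change ∫ l in (0 : ℝ)..Real.pi, g l = 0
  linarith

/-- `mixed_eq` for the possibly negative frequency `n - 2m`. -/
lemma integral_cos_eq {t : ℝ} (h0 : 0 < t) (h1 : t < 1) {n m : ℕ} (hmn : m ≤ n) :
    ∫ l in (0 : ℝ)..Real.pi,
      Real.cos (((n : ℝ) - 2 * m) * phi t l) * Real.cos (n * l) * rho t l = Real.pi * t ^ n := by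
  rcases le_total (2 * m) n with h | h
  · obtain ⟨j, rfl⟩ := Nat.exists_eq_add_of_le' h
    rw [← mixed_eq h0 h1 j m, mixed]
    congr 1; ext l
    push_cast
    ring_nf
  · obtain ⟨k, rfl⟩ := Nat.exists_eq_add_of_le' hmn
    obtain ⟨j, hj⟩ := Nat.exists_eq_add_of_le' (show k ≤ m by omega)
    subst hj
    have := mixed_eq h0 h1 j k
    rw [show k + (j + k) = j + 2 * k by ring, ← this, mixed]
    congr 1; ext l
    push_cast
    rw [← Real.cos_neg]
    ring_nf

/-- The value does not depend on `m`; this is what makes the two terms of `F_n` cancel. -/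
lemma integral_exp_eq {t : ℝ} (h0 : 0 < t) (h1 : t < 1) {n m : ℕ} (hmn : m ≤ n) :
    ∫ l in (0 : ℝ)..Real.pi,
      Complex.exp (((((n : ℝ) - 2 * m) * phi t l : ℝ) : ℂ) * Complex.I) *
        ((Real.cos (n * l) * rho t l : ℝ) : ℂ) = ((Real.pi * t ^ n : ℝ) : ℂ) := by
  have hr := continuous_rho h0 h1
  have hp := continuous_phi t
  have e : ∀ l : ℝ, Complex.exp (((((n : ℝ) - 2 * m) * phi t l : ℝ) : ℂ) * Complex.I) *
        ((Real.cos (n * l) * rho t l : ℝ) : ℂ) =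
      ((Real.cos (((n : ℝ) - 2 * m) * phi t l) * Real.cos (n * l) * rho t l : ℝ) : ℂ) +
      Complex.I *
        ((Real.sin (((n : ℝ) - 2 * m) * phi t l) * Real.cos (n * l) * rho t l : ℝ) : ℂ) := by
    intro l
    rw [Complex.exp_mul_I, ← Complex.ofReal_cos, ← Complex.ofReal_sin]
    push_cast
    ring
  simp_rw [e]
  rw [intervalIntegral.integral_add, intervalIntegral.integral_const_mul,
    intervalIntegral.integral_ofReal, intervalIntegral.integral_ofReal,
    integral_cos_eq h0 h1 hmn, integral_sin_eq_zero]
  · simp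
  all_goals exact Continuous.intervalIntegrable (by fun_prop) _ _

/-- The integral of `|cos ((n + 1)l) - t e^{-iφ} cos (nl)| ^ 2` against the density, where the
modulus has been expanded and `cos φ` expressed through `cos l`. -/
lemma integral_sq_eq {t : ℝ} (h0 : 0 < t) (h1 : t < 1) (n : ℕ) :
    ∫ l in (0 : ℝ)..Real.pi, (Real.cos ((n + 1 : ℕ) * l) ^ 2
      - 2 * t * (2 * t / (1 + t ^ 2) * Real.cos l) * Real.cos ((n + 1 : ℕ) * l) * Real.cos (n * l)
      + t ^ 2 * Real.cos (n * l) ^ 2) * rho t l = Real.pi * (1 - t ^ 2) / 2 := by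
  have hr := continuous_rho h0 h1
  have e : ∀ l : ℝ, (Real.cos ((n + 1 : ℕ) * l) ^ 2
      - 2 * t * (2 * t / (1 + t ^ 2) * Real.cos l) * Real.cos ((n + 1 : ℕ) * l) * Real.cos (n * l)
      + t ^ 2 * Real.cos (n * l) ^ 2) * rho t l =
      ((1 + t ^ 2) / 2 - t ^ 2 / (1 + t ^ 2)) * (Real.cos (2 * (0 : ℕ) * l) * rho t l) -
        t ^ 2 / (1 + t ^ 2) * (Real.cos (2 * (1 : ℕ) * l) * rho t l) +
      ((1 / 2 - t ^ 2 / (1 + t ^ 2)) * (Real.cos (2 * (n + 1 : ℕ) * l) * rho t l) +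
        (t ^ 2 / 2 - t ^ 2 / (1 + t ^ 2)) * (Real.cos (2 * n * l) * rho t l)) := by
    intro l
    have e1 : (2 * (n + 1 : ℕ) * l : ℝ) = 2 * (n * l + l) := by push_cast; ring
    have e2 : (2 * n * l : ℝ) = 2 * (n * l) := by ring
    have e3 : ((n + 1 : ℕ) * l : ℝ) = n * l + l := by push_cast; ring
    rw [e1, e2, e3, Real.cos_two_mul, Real.cos_two_mul, Real.cos_add]
    simp only [Nat.cast_zero, mul_zero, zero_mul, Real.cos_zero, Nat.cast_one, mul_one,
        Real.cos_two_mul]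
    have hs := Real.sin_sq_add_cos_sq l
    have hs' := Real.sin_sq_add_cos_sq (n * l)
    have hA : Real.sin l ^ 2 = 1 - Real.cos l ^ 2 := by linarith
    have hB : Real.sin (n * l) ^ 2 = 1 - Real.cos (n * l) ^ 2 := by linarith
    field_simp
    ring_nf
    simp only [hA, hB]
    ring
  simp_rw [e]
  rw [intervalIntegral.integral_add, intervalIntegral.integral_sub, intervalIntegral.integral_add,
    intervalIntegral.integral_const_mul, intervalIntegral.integral_const_mul,
    intervalIntegral.integral_const_mul, intervalIntegral.integral_const_mul]
  · have := moment_eq h0 h1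
    simp only [moment] at this
    rw [this, this, this, this]
    field_simp
    ring
  all_goals exact Continuous.intervalIntegrable (by fun_prop) _ _

/-! ### The change of variable `θ = 2 φ(λ)` -/

lemma sin_phi_pos {t : ℝ} (h0 : 0 < t) (h1 : t < 1) (l : ℝ) : 0 < Real.sin (phi t l) := by
  have h := abs_lt.1 (abs_ratio_mul_cos_lt h0 h1 l)
  rw [phi, Real.sin_arccos]
  apply Real.sqrt_pos.2
  nlinarith

lemma sin_half_eq {α t : ℝ} (hα : α ∈ Ioo 0 Real.pi) (h1 : t < 1) (h0 : 0 < t)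
    (hc : Real.cos (α / 2) = 2 * t / (1 + t ^ 2)) :
    Real.sin (α / 2) = (1 - t ^ 2) / (1 + t ^ 2) := by
  have hs : 0 < Real.sin (α / 2) :=
    Real.sin_pos_of_pos_of_lt_pi (by linarith [hα.1]) (by linarith [hα.2, Real.pi_pos])
  have h2 : 0 < (1 - t ^ 2) / (1 + t ^ 2) := div_pos (by nlinarith) (by positivity)
  rw [← sq_eq_sq₀ hs.le h2.le, Real.sin_sq, hc]
  field_simp
  ring

lemma hasDerivAt_two_phi {t : ℝ} (h0 : 0 < t) (h1 : t < 1) (l : ℝ) :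
    HasDerivAt (fun l => 2 * phi t l)
      (2 * (2 * t / (1 + t ^ 2)) * Real.sin l / Real.sin (phi t l)) l := by
  have h := abs_lt.1 (abs_ratio_mul_cos_lt h0 h1 l)
  have := ((Real.hasDerivAt_arccos h.1.ne' h.2.ne).comp l
    ((Real.hasDerivAt_cos l).const_mul (2 * t / (1 + t ^ 2)))).const_mul 2
  refine this.congr_deriv ?_
  rw [show Real.sin (phi t l) = _ from Real.sin_arccos _]
  ring

lemma arccos_cos_phi {t l : ℝ} (h0 : 0 < t) (h1 : t < 1) (hl : l ∈ Ioo 0 Real.pi) :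
    Real.arccos (Real.cos (phi t l) / (2 * t / (1 + t ^ 2))) = l := by
  rw [cos_phi h0 h1, mul_div_cancel_left₀ _ (ratio_mem h0 h1).1.ne',
    Real.arccos_cos hl.1.le hl.2.le]

lemma image_two_phi {α t : ℝ} (hα : α ∈ Ioo 0 Real.pi) (h0 : 0 < t) (h1 : t < 1)
    (hc : Real.cos (α / 2) = 2 * t / (1 + t ^ 2)) :
    (fun l => 2 * phi t l) '' Ioo 0 Real.pi = Ioo α (2 * Real.pi - α) := by
  have hpos := (ratio_mem h0 h1).1
  have hpi := Real.pi_pos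
  obtain ⟨ha, hb⟩ := hα
  ext θ
  constructor
  · rintro ⟨l, hl, rfl⟩
    have hp0 : 0 ≤ phi t l := Real.arccos_nonneg _
    have hp1 : phi t l ≤ Real.pi := Real.arccos_le_pi _
    have hcl : Real.cos l < 1 := by
      rw [← Real.cos_zero]
      exact Real.cos_lt_cos_of_nonneg_of_le_pi le_rfl hl.2.le hl.1
    have hcl' : -1 < Real.cos l := by
      rw [← Real.cos_pi]
      exact Real.cos_lt_cos_of_nonneg_of_le_pi hl.1.le le_rfl hl.2
    have e := cos_phi h0 h1 l
    rw [← hc] at e hpos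
    have k1 : Real.cos (phi t l) < Real.cos (α / 2) := by rw [e]; nlinarith
    have k2 : Real.cos (Real.pi - α / 2) < Real.cos (phi t l) := by
      rw [e, Real.cos_pi_sub]; nlinarith
    have k1' := (Real.strictAntiOn_cos.lt_iff_gt ⟨hp0, hp1⟩
      ⟨by linarith, by linarith⟩).1 k1
    have k2' := (Real.strictAntiOn_cos.lt_iff_gt
      ⟨by linarith, by linarith⟩ ⟨hp0, hp1⟩).1 k2
    constructor <;> simp only <;> linarith
  · rintro ⟨hθ1, hθ2⟩
    have k1 : Real.cos (θ / 2) < Real.cos (α / 2) :=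
      Real.cos_lt_cos_of_nonneg_of_le_pi (by linarith) (by linarith) (by linarith)
    have k2 : Real.cos (Real.pi - α / 2) < Real.cos (θ / 2) :=
      Real.cos_lt_cos_of_nonneg_of_le_pi (by linarith) (by linarith) (by linarith)
    rw [Real.cos_pi_sub] at k2
    rw [← hc] at hpos
    have m1 : Real.cos (θ / 2) / Real.cos (α / 2) < 1 := (div_lt_one hpos).2 k1
    have m2 : -1 < Real.cos (θ / 2) / Real.cos (α / 2) := by
      rw [lt_div_iff₀ hpos]; linarith
    refine ⟨Real.arccos (Real.cos (θ / 2) / Real.cos (α / 2)),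
      ⟨Real.arccos_pos.2 m1, ?_⟩, ?_⟩
    · refine lt_of_le_of_ne (Real.arccos_le_pi _) fun h => ?_
      rw [Real.arccos_eq_pi] at h
      linarith
    · simp only [phi]
      rw [Real.cos_arccos m2.le m1.le, ← hc, mul_div_cancel₀ _ hpos.ne',
        Real.arccos_cos (by linarith) (by linarith)]
      ring

lemma deriv_mul_wAC {α t l : ℝ} (hα : α ∈ Ioo 0 Real.pi) (h0 : 0 < t) (h1 : t < 1)
    (hc : Real.cos (α / 2) = 2 * t / (1 + t ^ 2)) (hl : l ∈ Ioo 0 Real.pi) :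
    |2 * (2 * t / (1 + t ^ 2)) * Real.sin l / Real.sin (phi t l)| * wAC α (2 * phi t l) =
      rho t l := by
  have hpos := (ratio_mem h0 h1).1
  have hS := sin_phi_pos h0 h1 l
  have hsl : 0 < Real.sin l := Real.sin_pos_of_pos_of_lt_pi hl.1 hl.2
  rw [abs_of_pos (by positivity), wAC, mul_div_cancel_left₀ _ (two_ne_zero), cos_phi h0 h1, hc,
    sin_half_eq hα h1 h0 hc]
  have hsq : Real.sqrt ((2 * t / (1 + t ^ 2)) ^ 2 - (2 * t / (1 + t ^ 2) * Real.cos l) ^ 2) =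
      2 * t / (1 + t ^ 2) * Real.sin l := by
    rw [← Real.sqrt_sq (mul_pos hpos hsl).le, mul_pow _ (Real.sin l), Real.sin_sq]
    congr 1; ring
  have hS2 : Real.sin (phi t l) ^ 2 =
      ((1 + t ^ 2) ^ 2 - 4 * t ^ 2 * Real.cos l ^ 2) / (1 + t ^ 2) ^ 2 := by
    rw [Real.sin_sq, cos_phi h0 h1]
    field_simp
    ring
  rw [hsq]
  have e : 2 * (2 * t / (1 + t ^ 2)) * Real.sin l / Real.sin (phi t l) *
      ((1 - t ^ 2) / (1 + t ^ 2) /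
        (2 * Real.sin (phi t l) * (2 * t / (1 + t ^ 2) * Real.sin l))) =
      (1 - t ^ 2) / (1 + t ^ 2) / Real.sin (phi t l) ^ 2 := by
    field_simp
  have hd := (rho_denom_pos h0 h1 l).ne'
  rw [e, hS2, rho, div_div_eq_mul_div, div_eq_div_iff hd hd]
  field_simp
  ring

/-- The weighted integral over the arc `(α, 2π - α)` becomes an integral against `rho t` over
`(0, π)`. -/
lemma integral_arc_eq {E : Type*} [NormedAddCommGroup E] [NormedSpace ℝ E] {α t : ℝ}
    (hα : α ∈ Ioo 0 Real.pi) (h0 : 0 < t) (h1 : t < 1)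
    (hc : Real.cos (α / 2) = 2 * t / (1 + t ^ 2)) (g H : ℝ → E)
    (hg : ∀ l ∈ Ioo 0 Real.pi, g (2 * phi t l) = wAC α (2 * phi t l) • H l) :
    ∫ θ in Ioo α (2 * Real.pi - α), g θ = ∫ l in (0 : ℝ)..Real.pi, rho t l • H l := by
  have hinj : InjOn (fun l => 2 * phi t l) (Ioo 0 Real.pi) := by
    intro a ha b hb hab
    rw [← arccos_cos_phi h0 h1 ha, ← arccos_cos_phi h0 h1 hb, mul_left_cancel₀ two_ne_zero hab]
  rw [← image_two_phi hα h0 h1 hc, integral_image_eq_integral_abs_deriv_smul measurableSet_Ioo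
    (fun l _ => (hasDerivAt_two_phi h0 h1 l).hasDerivWithinAt) hinj,
    intervalIntegral.integral_of_le Real.pi_pos.le, integral_Ioc_eq_integral_Ioo]
  refine setIntegral_congr_fun measurableSet_Ioo fun l hl => ?_
  rw [hg l hl, smul_smul, deriv_mul_wAC hα h0 h1 hc hl]

lemma cos_half_eq {α : ℝ} (hα : α ∈ Ioo 0 Real.pi) :
    0 < Real.tan ((Real.pi - α) / 4) ∧ Real.tan ((Real.pi - α) / 4) < 1 ∧
    Real.cos (α / 2) =
      2 * Real.tan ((Real.pi - α) / 4) / (1 + Real.tan ((Real.pi - α) / 4) ^ 2) := by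
  obtain ⟨ha, hb⟩ := hα
  have hpi := Real.pi_pos
  have hcos : 0 < Real.cos ((Real.pi - α) / 4) :=
    Real.cos_pos_of_mem_Ioo ⟨by linarith, by linarith⟩
  refine ⟨Real.tan_pos_of_pos_of_lt_pi_div_two (by linarith) (by linarith), ?_, ?_⟩
  · rw [← Real.tan_pi_div_four]
    exact Real.tan_lt_tan_of_lt_of_lt_pi_div_two (by linarith) (by linarith) (by linarith)
  · have : α / 2 = Real.pi / 2 - 2 * ((Real.pi - α) / 4) := by ring
    rw [this, Real.cos_pi_div_two_sub, Real.sin_two_mul, Real.tan_eq_sin_div_cos]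
    field_simp
    rw [Real.cos_sq_add_sin_sq, mul_one]

/-! ### The orthonormality relations -/

theorem stmt11 (α : ℝ) (hα : α ∈ Set.Ioo 0 Real.pi) (n : ℕ) (hn : 1 ≤ n)
    (β : ℂ) (hβ : β = Complex.I * Real.tan ((Real.pi - α) / 4))
    (K : ℝ) (hK : K = Real.sqrt (2 * Real.sin (α / 2) / (1 + Real.sin (α / 2))))
    (F : ℝ → ℂ)
    (hF : F = fun θ : ℝ =>
      ((2 * K : ℝ) : ℂ) * Complex.exp (((n : ℝ) * θ / 2 : ℝ) * Complex.I) *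
        ((Complex.I * β / (1 + β ^ 2)) * Complex.exp ((-(θ / 2) : ℝ) * Complex.I) *
            ((Real.cos (((n : ℝ) - 1) *
                Real.arccos (Real.cos (θ / 2) / Real.cos (α / 2))) : ℝ) : ℂ) +
          (1 / (1 + β ^ 2)) *
            ((Real.cos ((n : ℝ) *
                Real.arccos (Real.cos (θ / 2) / Real.cos (α / 2))) : ℝ) : ℂ))) :
    (∀ m : ℕ, m < n →
      ∫ θ in Set.Ioo α (2 * Real.pi - α),
        F θ * Complex.exp ((-(m * θ) : ℝ) * Complex.I) * ((wAC α θ : ℝ) : ℂ) = 0) ∧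
    (1 / (2 * Real.pi)) *
      ∫ θ in Set.Ioo α (2 * Real.pi - α), ‖F θ‖ ^ 2 * wAC α θ = 1 := by
  obtain ⟨h0, h1, hc⟩ := cos_half_eq hα
  set t := Real.tan ((Real.pi - α) / 4)
  have h2 : 0 < 1 - t ^ 2 := by nlinarith
  have hr := continuous_rho h0 h1
  have hp := continuous_phi t
  have hK2 : K ^ 2 = 1 - t ^ 2 := by
    have : 2 * Real.sin (α / 2) / (1 + Real.sin (α / 2)) = 1 - t ^ 2 := by
      rw [sin_half_eq hα h1 h0 hc]
      field_simp
      ring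
    rw [hK, this, Real.sq_sqrt h2.le]
  -- With `n = N + 1`, the frequency `n - 1` of the second cosine is the natural number `N`.
  obtain ⟨N, rfl⟩ := Nat.exists_eq_add_of_le' hn
  have hFl : ∀ l ∈ Ioo 0 Real.pi, F (2 * phi t l) =
      ((2 * K / (1 - t ^ 2) : ℝ) : ℂ) *
        Complex.exp ((((N + 1 : ℕ) : ℝ) * phi t l : ℝ) * Complex.I) *
        (((Real.cos ((N + 1 : ℕ) * l) : ℝ) : ℂ) -
          (t : ℂ) * Complex.exp ((-phi t l : ℝ) * Complex.I) * ((Real.cos (N * l) : ℝ) : ℂ)) := by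
    intro l hl
    have hI : Complex.I * β = -(t : ℂ) := by
      rw [hβ, ← mul_assoc, Complex.I_mul_I]; ring
    have hβ2 : 1 + β ^ 2 = ((1 - t ^ 2 : ℝ) : ℂ) := by
      rw [hβ, mul_pow, Complex.I_sq]; push_cast; ring
    have e1 : ((N + 1 : ℕ) : ℝ) * (2 * phi t l) / 2 = (N + 1 : ℕ) * phi t l := by ring
    have e2 : ((N + 1 : ℕ) : ℝ) - 1 = N := by push_cast; ring
    rw [hF]
    simp only
    rw [hI, hβ2, e1, e2, mul_div_cancel_left₀ _ (two_ne_zero), hc, arccos_cos_phi h0 h1 hl,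
      Complex.ofReal_div]
    ring
  constructor
  · intro m hm
    have hmN : m ≤ N := by omega
    rw [integral_arc_eq hα h0 h1 hc _ (fun l => ((2 * K / (1 - t ^ 2) : ℝ) : ℂ) *
      (Complex.exp ((((((N + 1 : ℕ) : ℝ) - 2 * m) * phi t l : ℝ) : ℂ) * Complex.I) *
        ((Real.cos ((N + 1 : ℕ) * l) : ℝ) : ℂ) -
      (t : ℂ) * (Complex.exp (((((N : ℝ) - 2 * m) * phi t l : ℝ) : ℂ) * Complex.I) *
        ((Real.cos (N * l) : ℝ) : ℂ))))]
    · have e : ∀ l : ℝ, rho t l • (((2 * K / (1 - t ^ 2) : ℝ) : ℂ) *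
        (Complex.exp ((((((N + 1 : ℕ) : ℝ) - 2 * m) * phi t l : ℝ) : ℂ) * Complex.I) *
          ((Real.cos ((N + 1 : ℕ) * l) : ℝ) : ℂ) -
        (t : ℂ) * (Complex.exp (((((N : ℝ) - 2 * m) * phi t l : ℝ) : ℂ) * Complex.I) *
          ((Real.cos (N * l) : ℝ) : ℂ)))) =
        ((2 * K / (1 - t ^ 2) : ℝ) : ℂ) *
        (Complex.exp ((((((N + 1 : ℕ) : ℝ) - 2 * m) * phi t l : ℝ) : ℂ) * Complex.I) *
          ((Real.cos ((N + 1 : ℕ) * l) * rho t l : ℝ) : ℂ) -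
        (t : ℂ) * (Complex.exp (((((N : ℝ) - 2 * m) * phi t l : ℝ) : ℂ) * Complex.I) *
          ((Real.cos (N * l) * rho t l : ℝ) : ℂ))) := by
        intro l
        rw [Complex.real_smul, Complex.ofReal_mul _ (rho t l), Complex.ofReal_mul _ (rho t l)]
        ring
      simp_rw [e]
      rw [intervalIntegral.integral_const_mul, intervalIntegral.integral_sub,
        intervalIntegral.integral_const_mul, integral_exp_eq h0 h1 (by omega),
        integral_exp_eq h0 h1 hmN]
      · push_cast; ring
      all_goals exact Continuous.intervalIntegrable (by fun_prop) _ _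
    · intro l hl
      have x1 : Complex.exp ((((((N + 1 : ℕ) : ℝ) - 2 * m) * phi t l : ℝ) : ℂ) * Complex.I) =
          Complex.exp ((((N + 1 : ℕ) : ℝ) * phi t l : ℝ) * Complex.I) *
            Complex.exp ((-(m * (2 * phi t l)) : ℝ) * Complex.I) := by
        rw [← Complex.exp_add]; congr 1; push_cast; ring
      have x2 : Complex.exp (((((N : ℝ) - 2 * m) * phi t l : ℝ) : ℂ) * Complex.I) =
          Complex.exp ((((N + 1 : ℕ) : ℝ) * phi t l : ℝ) * Complex.I) *
            Complex.exp ((-phi t l : ℝ) * Complex.I) *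
            Complex.exp ((-(m * (2 * phi t l)) : ℝ) * Complex.I) := by
        rw [← Complex.exp_add, ← Complex.exp_add]; congr 1; push_cast; ring
      rw [hFl l hl, x1, x2, Complex.real_smul]
      ring
  · rw [integral_arc_eq hα h0 h1 hc _ (fun l => 4 / (1 - t ^ 2) *
      (Real.cos ((N + 1 : ℕ) * l) ^ 2
      - 2 * t * (2 * t / (1 + t ^ 2) * Real.cos l) * Real.cos ((N + 1 : ℕ) * l) * Real.cos (N * l)
      + t ^ 2 * Real.cos (N * l) ^ 2))]
    · have := integral_sq_eq h0 h1 N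
      simp_rw [smul_eq_mul, mul_left_comm (rho t _), mul_comm (rho t _)]
      rw [intervalIntegral.integral_const_mul, this]
      have := Real.pi_pos
      field_simp
      norm_num
    · intro l hl
      have nsq : ∀ a b x : ℝ, ‖(a : ℂ) - (t : ℂ) * Complex.exp ((-x : ℝ) * Complex.I) * (b : ℂ)‖ ^ 2
          = a ^ 2 - 2 * t * Real.cos x * a * b + t ^ 2 * b ^ 2 := by
        intro a b x
        rw [Complex.exp_mul_I, ← Complex.ofReal_cos, ← Complex.ofReal_sin, Complex.sq_norm,
          Complex.normSq_apply]
        simp [-Complex.ofReal_cos, -Complex.ofReal_sin]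
        linear_combination t ^ 2 * b ^ 2 * Real.sin_sq_add_cos_sq x
      rw [hFl l hl, norm_mul, norm_mul, Complex.norm_exp_ofReal_mul_I, mul_one, mul_pow, nsq,
        cos_phi h0 h1, Complex.norm_real, Real.norm_eq_abs, sq_abs, smul_eq_mul, div_pow, mul_pow,
        hK2]
      field_simp
      ring
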